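/- arXiv:1707.02003 — 2 statements merged into one kernel-verified Lean document; each statement's English description precedes it below -/
import Mathlib

section
/- Let q = 2^m where m ≥ 3, and let Tr denote the absolute trace map from GF(2^m) to GF(2). Let B = {u ∈ GF(q) : Tr(u³) = 1}. Then for every t ∈ GF(q)* there exists x₁ ∈ B such that Tr(t·x₁) = 1. -/
/-!
Write `Tr` for the trace and suppose that `Tr (t * u) = 0` whenever `Tr (u ^ 3) = 1`; say then that
`t` is *bad*. There are two cases.

If `F` has no primitive cube root of unity, cubing is a bijection of `F`, so
`{u | Tr (u ^ 3) = 1}` has as many elements as `{u | Tr u = 1}`, hence as many as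
`{u | Tr (t * u) = 0}`. The former set is contained in the latter, so they are equal, although
only the latter contains `0`.

If `ω ^ 2 + ω + 1 = 0`, then `t * ω` and `t * ω ^ 2` are bad too, since `(ω * u) ^ 3 = u ^ 3`.
The map `u ↦ Tr (u ^ 3)` is a quadratic form with polar form
`B h k = Tr (h ^ 2 * k + h * k ^ 2)`. For bad `s` it vanishes on the affine hyperplane
`Tr (s * x) = 1`, so `B` vanishes on the hyperplane `Tr (s * x) = 0` (`IsBad.polar_eq_zero`). If
`k` lies in these hyperplanes for all of `s = t, t * ω, t * ω ^ 2`, then `k` is in the radical of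
`B`, because every `b` lies in one of the three. The radical consists of the solutions of
`k ^ 4 = k` (`pow_four_eq_of_polar_eq_zero`), so `Tr (k ^ 3) ∈ {0, Tr 1} = {0}`; every other `k`
has `Tr (k ^ 3) = 0` by badness. Hence `Tr (u ^ 3)` is identically zero, `B = 0`, and all
elements of `F` satisfy `x ^ 4 = x`, which is impossible when `F` has at least `8` elements.
-/

namespace TraceCube

set_option linter.unusedSectionVars false

variable {F : Type*} [Field F] [Fintype F] [Algebra (ZMod 2) F]

/-- The absolute trace of `F`. -/
local notation "Tr" => Algebra.trace (ZMod 2) F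

/-- `t` is bad if the linear form `Tr (t * ·)` vanishes on `{u | Tr (u ^ 3) = 1}`, that is, if
`t` is a counterexample to the theorem (or zero). -/
def IsBad (t : F) : Prop := ∀ u : F, Tr (u ^ 3) = 1 → Tr (t * u) = 0

lemma zmod_two_cases (z : ZMod 2) : z = 0 ∨ z = 1 := by
  revert z; decide

variable (F) in
lemma two_eq_zero : (2 : F) = 0 := by
  have : CharP F 2 := charP_of_injective_algebraMap (algebraMap (ZMod 2) F).injective 2
  exact CharTwo.two_eq_zero

lemma trace_sq (x : F) : Tr (x ^ 2) = Tr x := by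
  have h := Algebra.trace_eq_of_algEquiv (FiniteField.frobeniusAlgEquivOfAlgebraic (ZMod 2) F) x
  simpa [FiniteField.coe_frobeniusAlgEquivOfAlgebraic, ZMod.card] using h

lemma exists_trace_mul_eq_one {t : F} (ht : t ≠ 0) : ∃ a : F, Tr (t * a) = 1 := by
  by_contra! hne
  refine ht ((traceForm_nondegenerate (ZMod 2) F).1 t fun a => ?_)
  rw [Algebra.traceForm_apply]
  exact (zmod_two_cases _).resolve_right (hne a)

lemma IsBad.trace_cube {t : F} (h : IsBad t) {u : F} (hu : Tr (t * u) = 1) : Tr (u ^ 3) = 0 := by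
  rcases zmod_two_cases (Tr (u ^ 3)) with h0 | h1
  · exact h0
  · rw [h u h1] at hu
    exact absurd hu (by decide)

lemma IsBad.mul_cube_root {t : F} (h : IsBad t) {w : F} (hw : w ^ 3 = 1) : IsBad (t * w) := by
  intro u hu
  rw [mul_assoc]
  exact h _ (by rw [mul_pow, hw, one_mul, hu])

/-- `Tr (u ^ 3)` vanishes on the affine hyperplane `Tr (t * u) = 1`, so its second differences
along the parallel hyperplane, which are the values of the polar form, vanish. -/
lemma IsBad.polar_eq_zero {t : F} (h : IsBad t) (ht : t ≠ 0) {b k : F}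
    (hb : Tr (t * b) = 0) (hk : Tr (t * k) = 0) : Tr (k ^ 2 * b + k * b ^ 2) = 0 := by
  obtain ⟨a, ha⟩ := exists_trace_mul_eq_one ht
  have h0 := h.trace_cube ha
  have h1 := h.trace_cube (u := a + b) (by rw [mul_add, map_add, ha, hb, add_zero])
  have h2 := h.trace_cube (u := a + k) (by rw [mul_add, map_add, ha, hk, add_zero])
  have h3 := h.trace_cube (u := a + b + k)
    (by rw [mul_add, mul_add, map_add, map_add, ha, hb, hk, add_zero, add_zero])
  have key : k ^ 2 * b + k * b ^ 2
      = (a + b + k) ^ 3 + (a + b) ^ 3 + (a + k) ^ 3 + a ^ 3 := by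
    linear_combination (-2 * a ^ 3 - 3 * a ^ 2 * b - 3 * a ^ 2 * k - 3 * a * b ^ 2
      - 3 * a * k ^ 2 - 3 * a * b * k - b ^ 3 - k ^ 3 - b ^ 2 * k - b * k ^ 2) * two_eq_zero F
  rw [key, map_add, map_add, map_add, h0, h1, h2, h3]
  simp

/-- The radical of the polar form consists of solutions of `k ^ 4 = k`, because
`Tr (k ^ 2 * b + k * b ^ 2) = Tr ((k ^ 4 + k) * b ^ 2)` and squaring is surjective. -/
lemma pow_four_eq_of_polar_eq_zero {k : F} (h : ∀ b : F, Tr (k ^ 2 * b + k * b ^ 2) = 0) :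
    k ^ 4 = k := by
  by_contra hne
  have hne' : k ^ 4 + k ≠ 0 := fun h0 => hne (by linear_combination h0 - k * two_eq_zero F)
  obtain ⟨a, ha⟩ := exists_trace_mul_eq_one hne'
  obtain ⟨b, rfl⟩ : ∃ b : F, b ^ 2 = a := by
    obtain ⟨b, hb⟩ := (FiniteField.frobeniusAlgEquivOfAlgebraic (ZMod 2) F).surjective a
    exact ⟨b, by simpa [FiniteField.coe_frobeniusAlgEquivOfAlgebraic, ZMod.card] using hb⟩
  have hb := h b
  rw [map_add, ← trace_sq (k ^ 2 * b), ← map_add,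
    show (k ^ 2 * b) ^ 2 + k * b ^ 2 = (k ^ 4 + k) * b ^ 2 by ring, ha] at hb
  exact absurd hb (by decide)

lemma exists_pow_four_ne (hF : 8 ≤ Fintype.card F) : ∃ x : F, x ^ 4 ≠ x := by
  classical
  by_contra! h
  obtain ⟨g, hg⟩ := IsCyclic.exists_generator (α := Fˣ)
  have hord := orderOf_eq_card_of_forall_mem_zpowers hg
  rw [Nat.card_eq_fintype_card, Fintype.card_units] at hord
  have hg3 : g ^ 3 = 1 := by
    have h4 : g ^ 4 = g := Units.ext (by simpa using h g)
    exact mul_right_cancel (b := g) (by rw [← pow_succ, h4, one_mul])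
  have := orderOf_le_of_pow_eq_one (by norm_num) hg3
  omega

/-- If `F` has no primitive cube root of unity, no nonzero `t` is bad. -/
lemma not_isBad_of_no_root (hw : ∀ w : F, w ^ 2 + w + 1 ≠ 0) {t : F} (ht : t ≠ 0) :
    ¬ IsBad t := by
  classical
  intro h
  have hinj : Function.Injective (fun x : F => x ^ 3) := by
    intro x y hxy
    have hxy : x ^ 3 = y ^ 3 := hxy
    by_cases hy : y = 0
    · subst hy
      simpa using hxy
    · by_contra hne
      apply hw (x / y)
      have hz : (x - y) * (x ^ 2 + x * y + y ^ 2) = 0 := by linear_combination hxy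
      have := (mul_eq_zero.mp hz).resolve_left (sub_ne_zero.mpr hne)
      field_simp
      linear_combination this
  obtain ⟨a, ha⟩ := exists_trace_mul_eq_one (one_ne_zero (α := F))
  rw [one_mul] at ha
  -- The permutation `u ↦ (u ^ 3 + a) / t` maps `{u | Tr (u ^ 3) = 1}` onto `{u | Tr (t * u) = 0}`,
  -- since `Tr a = 1`.
  have hbij : Function.Bijective (fun u : F => (u ^ 3 + a) / t) := by
    apply Finite.injective_iff_bijective.mp
    intro x y hxy
    have hxy : (x ^ 3 + a) / t = (y ^ 3 + a) / t := hxy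
    rw [div_left_inj' ht] at hxy
    exact hinj (add_right_cancel hxy)
  have hcard : (Finset.univ.filter fun u : F => Tr (t * u) = 0).card
      ≤ (Finset.univ.filter fun u : F => Tr (u ^ 3) = 1).card := by
    apply Finset.card_le_card_of_surjOn (fun u : F => (u ^ 3 + a) / t)
    intro v hv
    obtain ⟨u, rfl⟩ := hbij.2 v
    refine ⟨u, ?_, rfl⟩
    simp only [Finset.coe_filter, Finset.mem_univ, true_and, Set.mem_ofPred_eq] at hv ⊢
    rw [mul_div_cancel₀ _ ht, map_add, ha] at hv
    rcases zmod_two_cases (Tr (u ^ 3)) with h0 | h1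
    · rw [h0] at hv
      exact absurd hv (by decide)
    · exact h1
  have heq := Finset.eq_of_subset_of_card_le
    (fun u hu => by
      simp only [Finset.mem_filter, Finset.mem_univ, true_and] at hu ⊢
      exact h u hu) hcard
  have h0 : (0 : F) ∈ Finset.univ.filter fun u : F => Tr (u ^ 3) = 1 := by
    rw [heq]
    simp
  simp at h0

/-- If `F` has a primitive cube root of unity and at least `8` elements, no nonzero `t` is bad. -/
lemma not_isBad_of_root (hF : 8 ≤ Fintype.card F) {w : F} (hw : w ^ 2 + w + 1 = 0) {t : F}
    (ht : t ≠ 0) : ¬ IsBad t := by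
  intro h
  have hw3 : w ^ 3 = 1 := by linear_combination (w - 1) * hw
  have hw0 : w ≠ 0 := by
    rintro rfl
    simp at hw
  have h1 : IsBad (t * w) := h.mul_cube_root hw3
  have h2 : IsBad (t * w * w) := h1.mul_cube_root hw3
  have ht1 : t * w ≠ 0 := mul_ne_zero ht hw0
  have hsum (x : F) : Tr (t * w * w * x) = Tr (t * x) + Tr (t * w * x) := by
    rw [← map_add]
    congr 1
    linear_combination (t * x) * hw - (t * x + t * w * x) * two_eq_zero F
  have htr1 : Tr (1 : F) = 0 := by
    have : (1 : F) = w ^ 2 + w := by linear_combination two_eq_zero F - hw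
    rw [this, map_add, trace_sq]
    exact CharTwo.add_self_eq_zero _
  have hzero (k : F) : Tr (k ^ 3) = 0 := by
    rcases zmod_two_cases (Tr (t * k)) with hk | hk
    swap
    · exact h.trace_cube hk
    rcases zmod_two_cases (Tr (t * w * k)) with hk1 | hk1
    swap
    · exact h1.trace_cube hk1
    have hk4 : k ^ 4 = k := by
      apply pow_four_eq_of_polar_eq_zero
      intro b
      rcases zmod_two_cases (Tr (t * b)) with hb | hb
      · exact h.polar_eq_zero ht hb hk
      rcases zmod_two_cases (Tr (t * w * b)) with hb1 | hb1
      · exact h1.polar_eq_zero ht1 hb1 hk1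
      · refine h2.polar_eq_zero (mul_ne_zero ht1 hw0) ?_ ?_
        · rw [hsum, hb, hb1]
          rfl
        · rw [hsum, hk, hk1, add_zero]
    by_cases hk0 : k = 0
    · simp [hk0]
    · have : k ^ 3 = 1 := mul_right_cancel₀ hk0 (by linear_combination hk4)
      rw [this, htr1]
  obtain ⟨x, hx⟩ := exists_pow_four_ne hF
  refine hx (pow_four_eq_of_polar_eq_zero fun b => ?_)
  have key : x ^ 2 * b + x * b ^ 2 = (x + b) ^ 3 + x ^ 3 + b ^ 3 := by
    linear_combination (-x ^ 3 - b ^ 3 - x ^ 2 * b - x * b ^ 2) * two_eq_zero F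
  rw [key, map_add, map_add, hzero, hzero, hzero]
  simp

end TraceCube

/-- For `q = 2^m`, `m ≥ 3`, and `B = {u ∈ GF(q) : Tr(u³) = 1}`: for every
`t ∈ GF(q)*` there exists `x₁ ∈ B` with `Tr(t·x₁) = 1`, where `Tr` is the
absolute trace map `GF(2^m) → GF(2)`. -/
theorem exists_mem_trace_cube_eq_one_with_trace_mul_eq_one
    (F : Type*) [Field F] [Fintype F] [Algebra (ZMod 2) F]
    (m : ℕ) (hm : 3 ≤ m) (hcard : Fintype.card F = 2 ^ m)
    (t : F) (ht : t ≠ 0) :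
    ∃ x₁ ∈ {u : F | Algebra.trace (ZMod 2) F (u ^ 3) = 1},
      Algebra.trace (ZMod 2) F (t * x₁) = 1 := by
  by_contra! hno
  have hbad : TraceCube.IsBad t := fun u hu =>
    (TraceCube.zmod_two_cases _).resolve_right (hno u hu)
  by_cases hw : ∃ w : F, w ^ 2 + w + 1 = 0
  · obtain ⟨w, hw⟩ := hw
    have hF : 8 ≤ Fintype.card F := by
      rw [hcard]
      exact Nat.pow_le_pow_right (n := 2) (by norm_num) hm
    exact TraceCube.not_isBad_of_root hF hw ht hbad
  · push Not at hw
    exact TraceCube.not_isBad_of_no_root hw ht hbad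
end

section
/- Let q = 2^m where m ≥ 4 is even, and let Tr denote the absolute trace map from GF(2^m) to GF(2). Let B = {u ∈ GF(q) : Tr(u³) = 1} and k = 2^{m-1} + (-2)^{m/2}. Then the orbit {π(B) : π ∈ GA_1(q)} is the block set of a 2-(2^m, k, k(k-1)/12) design on GF(q). -/
/-! Write `f u = Tr (u³)`, with values in `GF(2)`. In characteristic two, `Tr (x²) = Tr x` turns the
polarization of `Tr (c u³)` into `Tr (u² (c v + c² v⁴))`, and nondegeneracy of the trace form then
controls everything.

* **Stabilizer.** The map `u ↦ a u + b`, `a ≠ 0`, preserves `f` if and only if `a³ = 1` and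
  `b⁴ = b` (`trace_cube_affine_iff`). As `m` is even, `GF(4) ⊆ GF(q)`, so the stabilizer of `B` has
  `3 · 4 = 12` elements.
* **Block size.** The sum `S = ∑ (-1)^{f u}` equals `q - 2|B|`, and expanding `S²` leaves only the
  contributions of `v ∈ GF(4)`, so `S² = 4q` (`charSum_sq`). The sign of `S` follows from `3 ∣ |B|`:
  `B` is a union of fibres of the cubing map on nonzero elements, each of size three.
* **Design.** The affine group acts sharply transitively on ordered pairs of distinct points, so
  exactly `k (k - 1)` affine maps `g` have both `x` and `y` in `g(B)`. Each block arises from twelve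
  of them, so there are `k (k - 1) / 12` blocks through `x` and `y`. -/

section TraceCube

variable {F : Type*} [Field F] [Fintype F] [Algebra (ZMod 2) F]

local notation "Tr" => Algebra.trace (ZMod 2) _

lemma two_eq_zero_of_algebra {K : Type*} [Field K] [Algebra (ZMod 2) K] : (2 : K) = 0 := by
  have h := map_ofNat (algebraMap (ZMod 2) K) 2
  rw [← h, show (OfNat.ofNat 2 : ZMod 2) = 0 from rfl, map_zero]

/-! ### The trace form in characteristic two -/

lemma trace_sq (x : F) : Tr (x ^ 2) = Tr x := by
  have h := Algebra.trace_eq_of_algEquiv (FiniteField.frobeniusAlgEquivOfAlgebraic (ZMod 2) F) x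
  simpa using h

lemma exists_sq_eq (x : F) : ∃ y : F, y ^ 2 = x := by
  obtain ⟨y, hy⟩ := (FiniteField.frobeniusAlgEquivOfAlgebraic (ZMod 2) F).surjective x
  exact ⟨y, by simpa using hy⟩

lemma eq_zero_of_trace_mul {w : F} (h : ∀ u : F, Tr (u * w) = 0) : w = 0 := by
  refine (traceForm_nondegenerate (ZMod 2) F).1 w fun u => ?_
  rw [Algebra.traceForm_apply, mul_comm]
  exact h u

lemma eq_zero_of_trace_sq_mul {w : F} (h : ∀ u : F, Tr (u ^ 2 * w) = 0) : w = 0 := by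
  refine eq_zero_of_trace_mul fun u => ?_
  obtain ⟨y, rfl⟩ := exists_sq_eq u
  exact h y

/-- The polarization of `u ↦ Tr (c u³)`, rewritten so that `u` occurs only through `u²`. -/
lemma trace_polar (c u v : F) :
    Tr (c * (u ^ 2 * v + u * v ^ 2)) = Tr (u ^ 2 * (c * v + c ^ 2 * v ^ 4)) := by
  have h : Tr (c * u * v ^ 2) = Tr (c ^ 2 * u ^ 2 * v ^ 4) := by
    rw [← trace_sq]; congr 1; ring
  rw [show c * (u ^ 2 * v + u * v ^ 2) = c * u ^ 2 * v + c * u * v ^ 2 by ring, map_add, h,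
    ← map_add]
  congr 1; ring

lemma trace_cube_add (u v : F) :
    Tr ((u + v) ^ 3) = Tr (u ^ 3) + Tr (v ^ 3) + Tr (u ^ 2 * (v + v ^ 4)) := by
  have h := trace_polar 1 u v
  simp only [one_mul, one_pow] at h
  rw [← h, ← map_add, ← map_add]
  congr 1
  linear_combination (u ^ 2 * v + u * v ^ 2) * two_eq_zero_of_algebra (K := F)

lemma pow_four_eq_self {K : Type*} [Field K] {v : K} (hv : v ^ 4 = v) : v = 0 ∨ v ^ 3 = 1 := by
  have : v * (v ^ 3 - 1) = 0 := by linear_combination hv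
  rcases mul_eq_zero.1 this with h | h
  · exact .inl h
  · exact .inr (sub_eq_zero.1 h)

lemma trace_one_eq_zero {m : ℕ} (heven : Even m) (hcard : Fintype.card F = 2 ^ m) :
    Tr (1 : F) = 0 := by
  have h := Algebra.trace_algebraMap (R := ZMod 2) (S := F) (1 : ZMod 2)
  have hc := Module.card_eq_pow_finrank (K := ZMod 2) (V := F)
  rw [hcard, ZMod.card] at hc
  rw [map_one, ← Nat.pow_right_injective le_rfl hc] at h
  rw [h, nsmul_eq_mul, mul_one]
  exact (ZMod.natCast_eq_zero_iff_even).2 heven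

lemma trace_cube_of_pow_four {m : ℕ} (heven : Even m) (hcard : Fintype.card F = 2 ^ m)
    {v : F} (hv : v ^ 4 = v) : Tr (v ^ 3) = 0 := by
  rcases pow_four_eq_self hv with h | h
  · simp [h]
  · rw [h, trace_one_eq_zero heven hcard]

/-! ### The stabilizer -/

/-- The affine maps preserving `u ↦ Tr (u³)` are those with `a³ = 1` and `b ∈ GF(4)`. -/
lemma trace_cube_affine_iff {m : ℕ} (heven : Even m) (hcard : Fintype.card F = 2 ^ m)
    {a b : F} (ha : a ≠ 0) :
    (∀ u : F, Tr ((a * u + b) ^ 3) = Tr (u ^ 3)) ↔ a ^ 3 = 1 ∧ b ^ 4 = b := by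
  have h2 := two_eq_zero_of_algebra (K := F)
  constructor
  · intro h
    have hb0 : Tr (b ^ 3) = 0 := by simpa using h 0
    have hg : ∀ u : F, Tr (u ^ 3) = Tr ((a * u) ^ 3) + Tr ((a * u) ^ 2 * (b + b ^ 4)) := by
      intro u
      rw [← h u, trace_cube_add, hb0, add_zero]
    -- The terms linear in `u` drop out of the polarization, leaving `Tr ((a³ - 1)(u²v + uv²)) = 0`.
    have hpol : ∀ u v : F, Tr ((a ^ 3 - 1) * (u ^ 2 * v + u * v ^ 2)) = 0 := by
      intro u v
      have e : (a ^ 3 - 1) * (u ^ 2 * v + u * v ^ 2) =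
          ((a * (u + v)) ^ 3 + (a * (u + v)) ^ 2 * (b + b ^ 4) - (u + v) ^ 3)
          - ((a * u) ^ 3 + (a * u) ^ 2 * (b + b ^ 4) - u ^ 3)
          - ((a * v) ^ 3 + (a * v) ^ 2 * (b + b ^ 4) - v ^ 3) := by
        linear_combination (-(a ^ 3 - 1) * (u ^ 2 * v + u * v ^ 2)
          - a ^ 2 * u * v * (b + b ^ 4)) * h2
      rw [e]
      simp only [map_sub, map_add, ← hg, sub_self]
    have hd : (a ^ 3 - 1) + (a ^ 3 - 1) ^ 2 = 0 := by
      refine eq_zero_of_trace_sq_mul fun u => ?_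
      have := hpol u 1
      rw [trace_polar] at this
      simpa using this
    have ha3 : a ^ 3 = 1 := by
      have : a ^ 3 * (a ^ 3 - 1) = 0 := by linear_combination hd
      rcases mul_eq_zero.1 this with h0 | h0
      · exact absurd h0 (pow_ne_zero 3 ha)
      · exact sub_eq_zero.1 h0
    refine ⟨ha3, ?_⟩
    have hb : b + b ^ 4 = 0 := by
      refine eq_zero_of_trace_sq_mul fun w => ?_
      have := hg (w / a)
      rw [mul_div_cancel₀ _ ha, div_pow, ha3, div_one] at this
      exact (left_eq_add).1 this
    linear_combination hb - b * h2
  · rintro ⟨ha3, hb⟩ u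
    rw [trace_cube_add, hb, trace_cube_of_pow_four heven hcard hb, mul_pow, ha3,
      show b + b = 0 by linear_combination b * h2]
    simp

/-! ### Cube roots -/

lemma exists_omega {K : Type*} [Field K] [Fintype K] {m : ℕ} (heven : Even m)
    (hcard : Fintype.card K = 2 ^ m) : ∃ w : K, w ^ 3 = 1 ∧ w ≠ 1 := by
  classical
  have h3 : 3 ∣ Fintype.card Kˣ := by
    rw [Fintype.card_units, hcard]
    obtain ⟨n, rfl⟩ := heven
    rw [← two_mul, pow_mul]
    exact Nat.sub_one_dvd_pow_sub_one 4 n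
  have : Fact (Nat.Prime 3) := ⟨Nat.prime_three⟩
  obtain ⟨g, hg⟩ := exists_prime_orderOf_dvd_card 3 h3
  refine ⟨g, ?_, ?_⟩
  · have := pow_orderOf_eq_one g
    rw [hg] at this
    rw [← Units.val_pow_eq_pow_val, this, Units.val_one]
  · intro h
    have h1 : g = 1 := Units.ext h
    simp [h1] at hg

open Classical in
lemma card_cube_eq {m : ℕ} (heven : Even m) (hcard : Fintype.card F = 2 ^ m)
    {x : F} (hx : x ≠ 0) : (Finset.univ.filter fun u : F => u ^ 3 = x ^ 3).card = 3 := by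
  obtain ⟨w, hw3, hw1⟩ := exists_omega heven hcard
  have hw : w ^ 2 + w + 1 = 0 := by
    have : (w - 1) * (w ^ 2 + w + 1) = 0 := by linear_combination hw3
    exact (mul_eq_zero.1 this).resolve_left (sub_ne_zero.2 hw1)
  have hw0 : w ≠ 0 := by rintro rfl; simp at hw
  have hs : (Finset.univ.filter fun u : F => u ^ 3 = x ^ 3) = {x, w * x, w ^ 2 * x} := by
    ext u
    simp only [Finset.mem_filter, Finset.mem_univ, true_and, Finset.mem_insert,
      Finset.mem_singleton]
    constructor
    · intro h
      have : (u - x) * ((u - w * x) * (u - w ^ 2 * x)) = 0 := by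
        linear_combination h + (-u ^ 2 * x + u * x ^ 2 * w) * hw + (-x ^ 3) * hw3
      rcases mul_eq_zero.1 this with h | h
      · exact .inl (sub_eq_zero.1 h)
      · rcases mul_eq_zero.1 h with h | h
        · exact .inr (.inl (sub_eq_zero.1 h))
        · exact .inr (.inr (sub_eq_zero.1 h))
    · rintro (rfl | rfl | rfl)
      · rfl
      · rw [mul_pow, hw3, one_mul]
      · linear_combination x ^ 3 * (w ^ 3 + 1) * hw3
  rw [hs, Finset.card_eq_three]
  refine ⟨x, w * x, w ^ 2 * x, ?_, ?_, ?_, rfl⟩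
  · intro h
    exact hw1 (mul_right_cancel₀ hx (by rw [← h, one_mul]))
  · intro h
    have h1 : w ^ 2 = 1 := mul_right_cancel₀ hx (by rw [← h, one_mul])
    exact hw1 (by linear_combination hw3 - w * h1)
  · intro h
    have h1 : w = w ^ 2 := mul_right_cancel₀ hx h
    exact hw1 (mul_left_cancel₀ hw0 (by rw [mul_one, ← sq, ← h1]))

open Classical in
lemma card_pow_four {m : ℕ} (heven : Even m) (hcard : Fintype.card F = 2 ^ m) :
    (Finset.univ.filter fun u : F => u ^ 4 = u).card = 4 := by
  have hs : (Finset.univ.filter fun u : F => u ^ 4 = u) =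
      insert 0 (Finset.univ.filter fun u : F => u ^ 3 = 1 ^ 3) := by
    ext u
    simp only [Finset.mem_filter, Finset.mem_univ, true_and, Finset.mem_insert, one_pow]
    refine ⟨pow_four_eq_self, ?_⟩
    rintro (rfl | h)
    · simp
    · linear_combination u * h
  rw [hs, Finset.card_insert_of_notMem (by simp), card_cube_eq heven hcard one_ne_zero]

/-! ### The character sum and the block size -/

/-- The nontrivial additive character of `GF(2)`, with integer values. -/
def signChar (a : ZMod 2) : ℤ := if a = 0 then 1 else -1

lemma signChar_add (a b : ZMod 2) : signChar (a + b) = signChar a * signChar b := by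
  revert a b; decide

lemma sum_signChar_trace_sq_mul {w : F} (hw : w ≠ 0) :
    ∑ u : F, signChar (Tr (u ^ 2 * w)) = 0 := by
  have h : ∃ u : F, Tr (u ^ 2 * w) ≠ 0 := by
    by_contra! h
    exact hw (eq_zero_of_trace_sq_mul h)
  obtain ⟨t, ht⟩ := h
  have h2 := two_eq_zero_of_algebra (K := F)
  have hshift := Fintype.sum_equiv (Equiv.addRight t)
    (fun u : F => signChar (Tr ((u + t) ^ 2 * w))) (fun u => signChar (Tr (u ^ 2 * w)))
    (fun u => rfl)
  have hneg : ∀ u : F, signChar (Tr ((u + t) ^ 2 * w)) = -signChar (Tr (u ^ 2 * w)) := by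
    intro u
    rw [show (u + t) ^ 2 * w = u ^ 2 * w + t ^ 2 * w by linear_combination u * t * w * h2,
      map_add, signChar_add, show signChar (Tr (t ^ 2 * w)) = -1 from if_neg ht]
    ring
  simp only [hneg, Finset.sum_neg_distrib] at hshift
  linarith

/-- `S² = ∑_v (-1)^{Tr v³} ∑_u (-1)^{Tr (u² (v + v⁴))}`, whose inner sum vanishes unless
`v ∈ GF(4)`. -/
lemma charSum_sq {m : ℕ} (heven : Even m) (hcard : Fintype.card F = 2 ^ m) :
    (∑ u : F, signChar (Tr (u ^ 3))) ^ 2 = 4 * 2 ^ m := by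
  classical
  have h2 := two_eq_zero_of_algebra (K := F)
  have hin : ∀ v : F, ∑ u : F, signChar (Tr (v ^ 3)) * signChar (Tr (u ^ 2 * (v + v ^ 4))) =
      if v ^ 4 = v then 2 ^ m else 0 := by
    intro v
    rw [← Finset.mul_sum]
    split_ifs with hv
    · rw [hv, show v + v = 0 by linear_combination v * h2,
        trace_cube_of_pow_four heven hcard hv]
      simp [signChar, hcard]
    · rw [sum_signChar_trace_sq_mul, mul_zero]
      intro h
      exact hv (by linear_combination h - v * h2)
  calc (∑ u : F, signChar (Tr (u ^ 3))) ^ 2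
      = ∑ u : F, ∑ v : F, signChar (Tr (u ^ 3)) * signChar (Tr (v ^ 3)) := by
        rw [sq, Finset.sum_mul_sum]
    _ = ∑ u : F, ∑ v : F, signChar (Tr (u ^ 3)) * signChar (Tr ((u + v) ^ 3)) := by
        refine Finset.sum_congr rfl fun u _ => ?_
        exact (Fintype.sum_equiv (Equiv.addLeft u) _ _ fun v => rfl).symm
    _ = ∑ u : F, ∑ v : F, signChar (Tr (v ^ 3)) * signChar (Tr (u ^ 2 * (v + v ^ 4))) := by
        refine Finset.sum_congr rfl fun u _ => Finset.sum_congr rfl fun v _ => ?_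
        have hs : ∀ a b c : ZMod 2,
            signChar a * signChar (a + b + c) = signChar b * signChar c := by decide
        rw [trace_cube_add, hs]
    _ = 4 * 2 ^ m := by
        rw [Finset.sum_comm]
        simp only [hin]
        rw [← Finset.sum_filter, Finset.sum_const, card_pow_four heven hcard]
        simp

open Classical in
lemma three_dvd_card {m : ℕ} (heven : Even m) (hcard : Fintype.card F = 2 ^ m) :
    3 ∣ (Finset.univ.filter fun u : F => Tr (u ^ 3) = 1).card := by
  rw [Finset.card_eq_sum_card_image (fun u : F => u ^ 3)]
  refine Finset.dvd_sum fun y hy => ?_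
  obtain ⟨x, hx, rfl⟩ := Finset.mem_image.1 hy
  have hx1 : Tr (x ^ 3) = 1 := (Finset.mem_filter.1 hx).2
  have hx0 : x ≠ 0 := by rintro rfl; simp at hx1
  refine dvd_of_eq ?_
  rw [Finset.filter_filter]
  refine (card_cube_eq heven hcard hx0).symm.trans (congrArg Finset.card ?_)
  ext u
  simp only [Finset.mem_filter, Finset.mem_univ, true_and]
  exact ⟨fun h => ⟨by rw [h, hx1], h⟩, fun h => h.2⟩

open Classical in
lemma charSum_eq {m : ℕ} (hcard : Fintype.card F = 2 ^ m) :
    ∑ u : F, signChar (Tr (u ^ 3)) =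
      2 ^ m - 2 * (Finset.univ.filter fun u : F => Tr (u ^ 3) = 1).card := by
  have hs : ∀ a : ZMod 2, signChar a = 1 - 2 * (if a = 1 then 1 else 0) := by decide
  simp only [hs, Finset.sum_sub_distrib, ← Finset.mul_sum, Finset.sum_boole]
  simp [hcard]

open Classical in
lemma card_trace_cube_eq_one {m : ℕ} (hm : 4 ≤ m) (heven : Even m)
    (hcard : Fintype.card F = 2 ^ m) :
    ((Finset.univ.filter fun u : F => Tr (u ^ 3) = 1).card : ℤ) =
      2 ^ (m - 1) + (-2) ^ (m / 2) := by
  have hsq := charSum_sq heven hcard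
  rw [charSum_eq hcard] at hsq
  have h3 := three_dvd_card heven hcard
  set N := (Finset.univ.filter fun u : F => Tr (u ^ 3) = 1).card
  obtain ⟨n, rfl⟩ := heven
  rw [show (n + n) / 2 = n by omega]
  have hp : (2 : ℤ) ^ (n + n) = 2 * 2 ^ (n + n - 1) := by
    rw [← pow_succ']; congr 1; omega
  have hq : (2 : ℤ) ^ (n + n) = (-2) ^ n * (-2) ^ n := by
    rw [← mul_pow, pow_add, ← mul_pow]; norm_num
  have hmod : ((-2 : ℤ)) ^ n ≡ 1 [ZMOD 3] := by
    simpa using (show (-2 : ℤ) ≡ 1 [ZMOD 3] by decide).pow n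
  have hfac : ((N : ℤ) - 2 ^ (n + n - 1) - (-2) ^ n) * (N - 2 ^ (n + n - 1) + (-2) ^ n) = 0 := by
    rw [hp] at hsq hq
    nlinarith
  rcases mul_eq_zero.1 hfac with h | h
  · linarith
  · -- The other sign is excluded modulo three, since `(-2)^n ≡ 1` and `3 ∣ |B|`.
    exfalso
    have hN : (3 : ℤ) ∣ N := by exact_mod_cast h3
    have hA : (2 : ℤ) ^ (n + n) ≡ 1 [ZMOD 3] := by
      rw [hq]; simpa using hmod.mul hmod
    generalize (-2 : ℤ) ^ n = s at *
    generalize (2 : ℤ) ^ (n + n - 1) = p at *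
    generalize (2 : ℤ) ^ (n + n) = t at *
    unfold Int.ModEq at *
    omega

/-! ### Counting blocks -/

/-- `B = {u : Tr (u³) = 1}`. -/
def traceCubeSet (F : Type*) [Field F] [Algebra (ZMod 2) F] : Set F :=
  {u : F | Algebra.trace (ZMod 2) F (u ^ 3) = 1}

lemma mem_affine_image {K : Type*} [Field K] {a b x : K} (ha : a ≠ 0) (S : Set K) :
    x ∈ (fun u => a * u + b) '' S ↔ (x - b) / a ∈ S := by
  constructor
  · rintro ⟨u, hu, rfl⟩
    simpa [ha] using hu
  · intro h
    exact ⟨_, h, by field_simp; ring⟩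

/-- Two affine maps give the same block exactly when they differ by an element of the
stabilizer. -/
lemma affine_image_eq_iff {m : ℕ} (heven : Even m) (hcard : Fintype.card F = 2 ^ m)
    {a b c d : F} (ha : a ≠ 0) (hc : c ≠ 0) :
    (fun u => a * u + b) '' traceCubeSet F = (fun u => c * u + d) '' traceCubeSet F ↔
      (a / c) ^ 3 = 1 ∧ ((b - d) / c) ^ 4 = (b - d) / c := by
  have hz : ∀ s t : ZMod 2, (s = 1 ↔ t = 1) → t = s := by decide
  rw [← trace_cube_affine_iff heven hcard (div_ne_zero ha hc)]
  constructor
  · intro h u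
    have hu := Set.ext_iff.1 h (a * u + b)
    rw [mem_affine_image ha, mem_affine_image hc] at hu
    have e1 : (a * u + b - b) / a = u := by field_simp; ring
    have e2 : (a * u + b - d) / c = a / c * u + (b - d) / c := by field_simp; ring
    rw [e1, e2] at hu
    exact hz _ _ hu
  · intro h
    ext x
    rw [mem_affine_image ha, mem_affine_image hc]
    have hx := h ((x - b) / a)
    have e : a / c * ((x - b) / a) + (b - d) / c = (x - d) / c := by field_simp; ring
    rw [e] at hx
    simp only [traceCubeSet, Set.mem_ofPred_eq, hx]

open Classical in
/-- The pairs `(a, b)`, `a ≠ 0`, whose block `aB + b` contains both `x` and `y`. -/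
noncomputable def pairsThrough (x y : F) : Finset (F × F) :=
  Finset.univ.filter fun p => p.1 ≠ 0 ∧ (x - p.2) / p.1 ∈ traceCubeSet F ∧
    (y - p.2) / p.1 ∈ traceCubeSet F

open Classical in
/-- Sharp 2-transitivity: `(a, b)` corresponds to the preimages `(s, t)` of `(x, y)` in `B`. -/
lemma card_pairsThrough {x y : F} (hxy : x ≠ y) :
    (pairsThrough x y).card = ((traceCubeSet F).toFinset.offDiag).card := by
  have hsub : x - y ≠ 0 := sub_ne_zero.2 hxy
  refine Finset.card_nbij' (fun p => ((x - p.2) / p.1, (y - p.2) / p.1))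
    (fun p => ((x - y) / (p.1 - p.2), x - (x - y) / (p.1 - p.2) * p.1)) ?_ ?_ ?_ ?_
  · rintro ⟨a, b⟩ h
    simp only [pairsThrough, Finset.coe_filter, Finset.mem_univ, true_and, Set.mem_ofPred_eq] at h
    obtain ⟨ha, h1, h2⟩ := h
    simp only [Finset.coe_offDiag, Set.coe_toFinset, Set.mem_offDiag]
    refine ⟨h1, h2, fun h => hxy ?_⟩
    rw [div_left_inj' ha] at h
    linear_combination h
  · rintro ⟨s, t⟩ h
    simp only [Finset.coe_offDiag, Set.coe_toFinset, Set.mem_offDiag] at h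
    obtain ⟨h1, h2, hst⟩ := h
    have hst' : s - t ≠ 0 := sub_ne_zero.2 hst
    simp only [pairsThrough, Finset.coe_filter, Finset.mem_univ, true_and, Set.mem_ofPred_eq]
    refine ⟨div_ne_zero hsub hst', ?_, ?_⟩
    · convert h1 using 1; field_simp; ring
    · convert h2 using 1; field_simp; ring
  · rintro ⟨a, b⟩ h
    simp only [pairsThrough, Finset.coe_filter, Finset.mem_univ, true_and, Set.mem_ofPred_eq] at h
    obtain ⟨ha, h1, h2⟩ := h
    have e : (x - b) / a - (y - b) / a = (x - y) / a := by field_simp; ring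
    simp only [e, Prod.mk.injEq]
    constructor
    · field_simp
    · field_simp; ring
  · rintro ⟨s, t⟩ h
    simp only [Finset.coe_offDiag, Set.coe_toFinset, Set.mem_offDiag] at h
    have hst' : s - t ≠ 0 := sub_ne_zero.2 h.2.2
    simp only [Prod.mk.injEq]
    constructor
    · field_simp; ring
    · field_simp; ring

/-- The block `aB + b` attached to `(a, b)`. -/
def blockOf (p : F × F) : Set F := (fun u => p.1 * u + p.2) '' traceCubeSet F

open Classical in
/-- Each block comes from twelve pairs `(a, b)`. -/
lemma card_fibre {m : ℕ} (heven : Even m) (hcard : Fintype.card F = 2 ^ m)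
    {x y : F} {p : F × F} (hp : p ∈ pairsThrough x y) :
    ((pairsThrough x y).filter fun r => blockOf r = blockOf p).card = 12 := by
  obtain ⟨c, d⟩ := p
  simp only [pairsThrough, Finset.mem_filter, Finset.mem_univ, true_and] at hp
  obtain ⟨hc, hx, hy⟩ := hp
  have h12 : ((Finset.univ.filter fun u : F => u ^ 3 = 1 ^ 3) ×ˢ
      (Finset.univ.filter fun u : F => u ^ 4 = u)).card = 12 := by
    rw [Finset.card_product, card_cube_eq heven hcard one_ne_zero, card_pow_four heven hcard]
  rw [← h12]
  refine Finset.card_nbij' (fun r => (r.1 / c, (r.2 - d) / c))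
    (fun r => (c * r.1, c * r.2 + d)) ?_ ?_ ?_ ?_
  · rintro ⟨a, b⟩ h
    simp only [pairsThrough, Finset.coe_filter, Finset.mem_filter, Finset.mem_univ, true_and,
      Set.mem_ofPred_eq] at h
    obtain ⟨⟨ha, -, -⟩, h⟩ := h
    simpa using (affine_image_eq_iff heven hcard ha hc).1 h
  · rintro ⟨a, b⟩ h
    simp only [Finset.coe_product, Finset.coe_filter, Finset.mem_univ, true_and, Set.mem_prod,
      Set.mem_ofPred_eq, one_pow] at h
    obtain ⟨h1, h2⟩ := h
    have ha : a ≠ 0 := by rintro rfl; simp at h1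
    have hca : c * a ≠ 0 := mul_ne_zero hc ha
    have heq : blockOf (c * a, c * b + d) = blockOf (c, d) := by
      refine (affine_image_eq_iff heven hcard hca hc).2 ?_
      rw [mul_div_cancel_left₀ _ hc, add_sub_cancel_right, mul_div_cancel_left₀ _ hc]
      exact ⟨h1, h2⟩
    simp only [pairsThrough, Finset.coe_filter, Finset.mem_filter, Finset.mem_univ, true_and,
      Set.mem_ofPred_eq]
    refine ⟨⟨hca, ?_, ?_⟩, heq⟩
    · rw [← mem_affine_image hca]
      exact heq.symm.subset ((mem_affine_image hc _).2 hx)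
    · rw [← mem_affine_image hca]
      exact heq.symm.subset ((mem_affine_image hc _).2 hy)
  · rintro ⟨a, b⟩ -
    simp only [Prod.mk.injEq]
    constructor
    · field_simp
    · field_simp; ring
  · rintro ⟨a, b⟩ -
    simp only [Prod.mk.injEq]
    constructor
    · field_simp
    · field_simp; ring

end TraceCube


/-- For `q = 2^m`, `m ≥ 4` even, `B = {u ∈ GF(q) : Tr(u³) = 1}` and
`k = 2^{m-1} + (-2)^{m/2}`, the orbit of `B` under `GA₁(q)` is the block set of
a 2-(2^m, k, k(k-1)/12) design on `GF(q)`. -/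
theorem ga1_design_from_trace_cube_eq_one
    (F : Type*) [Field F] [Fintype F] [Algebra (ZMod 2) F]
    (m : ℕ) (hm : 4 ≤ m) (heven : Even m) (hcard : Fintype.card F = 2 ^ m)
    (B : Set F) (hB : B = {u : F | Algebra.trace (ZMod 2) F (u ^ 3) = 1})
    (k : ℕ) (hk : (k : ℤ) = 2 ^ (m - 1) + (-2) ^ (m / 2)) :
    (∀ C ∈ {C : Set F | ∃ a b : F, a ≠ 0 ∧ C = (fun x => a * x + b) '' B}, C.ncard = k) ∧
    (∀ x y : F, x ≠ y →
      {C : Set F | (∃ a b : F, a ≠ 0 ∧ C = (fun x => a * x + b) '' B) ∧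
        x ∈ C ∧ y ∈ C}.ncard = k * (k - 1) / 12) := by
  classical
  subst hB
  change (∀ C ∈ {C : Set F | ∃ a b : F, a ≠ 0 ∧ C = (fun x => a * x + b) '' traceCubeSet F},
      C.ncard = k) ∧ (∀ x y : F, x ≠ y →
      {C : Set F | (∃ a b : F, a ≠ 0 ∧ C = (fun x => a * x + b) '' traceCubeSet F) ∧
        x ∈ C ∧ y ∈ C}.ncard = k * (k - 1) / 12)
  have hBk : (traceCubeSet F).toFinset.card = k := by
    have h := card_trace_cube_eq_one (F := F) hm heven hcard
    rw [← hk] at h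
    have hs : (traceCubeSet F).toFinset =
        Finset.univ.filter fun u : F => Algebra.trace (ZMod 2) F (u ^ 3) = 1 := by
      ext u
      rw [Set.mem_toFinset, Finset.mem_filter_univ]
      exact Iff.rfl
    rw [hs]
    exact_mod_cast h
  constructor
  · rintro C ⟨a, b, ha, rfl⟩
    rw [Set.ncard_image_of_injective _ fun u v h => mul_left_cancel₀ ha (add_right_cancel h),
      Set.ncard_eq_toFinset_card', hBk]
  · intro x y hxy
    have hset : {C : Set F | (∃ a b : F, a ≠ 0 ∧ C = (fun x => a * x + b) '' traceCubeSet F) ∧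
        x ∈ C ∧ y ∈ C} = ((pairsThrough x y).image blockOf : Finset (Set F)) := by
      ext C
      simp only [Set.mem_ofPred_eq, Finset.coe_image, Set.mem_image, Finset.mem_coe, pairsThrough,
        Finset.mem_filter, Finset.mem_univ, true_and, Prod.exists]
      constructor
      · rintro ⟨⟨a, b, ha, rfl⟩, hx, hy⟩
        exact ⟨a, b, ⟨ha, (mem_affine_image ha _).1 hx, (mem_affine_image ha _).1 hy⟩, rfl⟩
      · rintro ⟨a, b, ⟨ha, hx, hy⟩, rfl⟩
        exact ⟨⟨a, b, ha, rfl⟩, (mem_affine_image ha _).2 hx, (mem_affine_image ha _).2 hy⟩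
    rw [hset, Set.ncard_coe_finset]
    have hcount := Finset.card_eq_sum_card_image blockOf (pairsThrough x y)
    rw [Finset.sum_congr rfl (g := fun _ => 12), Finset.sum_const, smul_eq_mul,
      card_pairsThrough hxy, Finset.offDiag_card, hBk] at hcount
    · rw [Nat.mul_sub, mul_one, hcount, Nat.mul_div_cancel _ (by norm_num)]
    · intro C hC
      obtain ⟨p, hp, rfl⟩ := Finset.mem_image.1 hC
      exact card_fibre heven hcard hp
end
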